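/- Let V ∈ L^∞(ℝ) with ess inf_{x∈ℝ} V(x) > 0, and suppose m(V) = lim_{a→∞} F(a;V) or m(V) = lim_{a→−∞} F(a;V). Let p ∈ [1,∞) and let μ = μ₀ + μ₁ with μ₀ ∈ L^p(ℝ) and μ₁ a signed Radon measure on ℝ of finite total variation, and suppose μ is nonnegative as a bilinear form, i.e., ∫_ℝ μ₀ u² dx + ∫_ℝ u² dμ₁ ≥ 0 for all u ∈ H¹(ℝ). Then m(V+μ) = m(V) and M(V+μ) ⊆ M(V). -/

import Mathlib

open MeasureTheory Filter Real Topology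

/-- The supremum norm `‖u‖_∞` of a (bounded continuous) function `u : ℝ → ℝ`. -/
noncomputable def supNorm (u : ℝ → ℝ) : ℝ := ⨆ x : ℝ, |u x|

/-- `u` is (the continuous representative of) an element of `H¹(ℝ)`:
`u` is continuous, `u ∈ L²(ℝ)`, and there is a weak derivative `u' ∈ L²(ℝ)`,
i.e. `u x = u 0 + ∫_0^x u'`. -/
def IsH1 (u : ℝ → ℝ) : Prop :=
  Continuous u ∧ MemLp u 2 (volume : Measure ℝ) ∧
    ∃ u' : ℝ → ℝ, MemLp u' 2 (volume : Measure ℝ) ∧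
      ∀ x : ℝ, u x = u 0 + ∫ t in (0:ℝ)..x, u' t

/-- The Dirichlet energy `∫_ℝ |u'(x)|² dx`.  (For `u ∈ H¹(ℝ)` the classical
derivative `deriv u` exists a.e. and coincides a.e. with the weak derivative.) -/
noncomputable def energy (u : ℝ → ℝ) : ℝ := ∫ x : ℝ, (deriv u x) ^ 2

/-- `I(u;V) = ∫_ℝ (|u'(x)|² + V(x)|u(x)|²) dx` for a potential `V : ℝ → ℝ`. -/
noncomputable def IV (V : ℝ → ℝ) (u : ℝ → ℝ) : ℝ :=
  ∫ x : ℝ, ((deriv u x) ^ 2 + V x * (u x) ^ 2)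

/-- Membership in `K_a = { u ∈ H¹(ℝ) ; u(a) = ‖u‖_∞ = 1 }`. -/
def InKa (a : ℝ) (u : ℝ → ℝ) : Prop := IsH1 u ∧ u a = 1 ∧ supNorm u = 1

/-- `F(a;V) = inf { I(u;V) ; u ∈ K_a }`. -/
noncomputable def FV (V : ℝ → ℝ) (a : ℝ) : ℝ :=
  sInf {r : ℝ | ∃ u : ℝ → ℝ, InKa a u ∧ r = IV V u}

/-- `m(V) = inf { I(u;V)/‖u‖_∞² ; u ∈ H¹(ℝ), u ≢ 0 }`. -/
noncomputable def mV (V : ℝ → ℝ) : ℝ :=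
  sInf {r : ℝ | ∃ u : ℝ → ℝ, IsH1 u ∧ u ≠ 0 ∧ r = IV V u / (supNorm u) ^ 2}

/-- Integral of `f` against a finite signed Radon measure `μ`, via its Jordan
decomposition `μ = μ₊ - μ₋`. -/
noncomputable def sMeasInt (μ : SignedMeasure ℝ) (f : ℝ → ℝ) : ℝ :=
  (∫ x, f x ∂μ.toJordanDecomposition.posPart) -
    (∫ x, f x ∂μ.toJordanDecomposition.negPart)

/-- `I(u;V+μ)` for the perturbation `μ = μ₀ + μ₁` with `μ₀ ∈ L^p(ℝ)` and
`μ₁` a finite signed measure. -/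
noncomputable def IVmu (V : ℝ → ℝ) (μ₀ : ℝ → ℝ) (μ₁ : SignedMeasure ℝ) (u : ℝ → ℝ) : ℝ :=
  IV V u + (∫ x : ℝ, μ₀ x * (u x) ^ 2) + sMeasInt μ₁ (fun x => (u x) ^ 2)

/-- `m(V+μ)`. -/
noncomputable def mVmu (V : ℝ → ℝ) (μ₀ : ℝ → ℝ) (μ₁ : SignedMeasure ℝ) : ℝ :=
  sInf {r : ℝ | ∃ u : ℝ → ℝ, IsH1 u ∧ u ≠ 0 ∧ r = IVmu V μ₀ μ₁ u / (supNorm u) ^ 2}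

/-!
Since `μ ≥ 0`, only `m(V + μ) ≤ m(V)` needs an argument; it also yields `M(V + μ) ⊆ M(V)`.
Fix a bump `k ∈ K_0` of small Dirichlet energy that vanishes at infinity, and multiply a near
minimizer `u ∈ K_a` of `F(a;V)` by the translate `k(· - a)`.  The product stays in `K_a`, and since
`|u| ≤ 1` and `V ≥ 0`, the cutoff costs at most `ε I(u;V) + (1 + 1/ε) ∫ |k'|²`.  The contribution of
`μ` is at most `∫ |μ₀| k(· - a)² + ∫ k(· - a)² dμ₁⁺`, which does not depend on `u` and tends to `0`
as `|a| → ∞`.  So if `m(V)` is approached by `F(a;V)` along some `|a| → ∞`, then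
`m(V + μ) ≤ (1 + ε) (m(V) + ε⁻¹ ∫ |k'|²)`, and it remains to shrink `∫ |k'|²` and then `ε`.
-/

section Translates

lemma exists_norm_le_of_tendsto_cocompact {X : Type*} [TopologicalSpace X] {g : X → ℝ}
    (hg : Continuous g) (hg0 : Tendsto g (cocompact X) (𝓝 0)) : ∃ C, ∀ x, ‖g x‖ ≤ C := by
  simpa using (⟨⟨g, hg⟩, hg0⟩ : ZeroAtInftyContinuousMap X ℝ).isBounded_range.exists_norm_le

lemma le_one_add_rpow {s q : ℝ} (hs : 0 ≤ s) (hq : 1 ≤ q) : s ≤ 1 + s ^ q := by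
  rcases le_total s 1 with h | h
  · exact h.trans (le_add_of_nonneg_right (rpow_nonneg hs q))
  · exact (self_le_rpow_of_one_le h hq).trans (le_add_of_nonneg_left zero_le_one)

lemma integrable_norm_mul_of_memLp {α : Type*} [MeasurableSpace α] {ν : Measure α} {p : ENNReal}
    (hp1 : 1 ≤ p) (hp2 : p ≠ ⊤) {f g : α → ℝ} (hf : MemLp f p ν) (hg : Integrable g ν) {C : ℝ}
    (hC : ∀ x, ‖g x‖ ≤ C) : Integrable (fun x => ‖f x‖ * g x) ν := by
  have hp : 1 ≤ p.toReal := ENNReal.toReal_mono hp2 hp1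
  have hfp := hf.integrable_norm_rpow (one_pos.trans_le hp1).ne' hp2
  have hfpg := hfp.mul_bdd hg.norm.1 (ae_of_all _ fun x => (norm_norm (g x)).trans_le (hC x))
  refine (hg.norm.add hfpg).mono' (hf.1.norm.mul hg.1) (ae_of_all _ fun x => ?_)
  calc ‖‖f x‖ * g x‖ = ‖f x‖ * ‖g x‖ := by rw [norm_mul, norm_norm]
    _ ≤ (1 + ‖f x‖ ^ p.toReal) * ‖g x‖ := by
      gcongr
      exact le_one_add_rpow (norm_nonneg _) hp
    _ = ‖g x‖ + ‖f x‖ ^ p.toReal * ‖g x‖ := by ring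

lemma integral_norm_mul_le_of_memLp {α : Type*} [MeasurableSpace α] {ν : Measure α} {p : ENNReal}
    (hp1 : 1 ≤ p) (hp2 : p ≠ ⊤) {f g : α → ℝ} (hf : MemLp f p ν) (hg : Integrable g ν) {C : ℝ}
    (hC : ∀ x, ‖g x‖ ≤ C) (hg_nonneg : ∀ x, 0 ≤ g x) {δ : ℝ} (hδ : 0 < δ) :
    ∫ x, ‖f x‖ * g x ∂ν ≤ δ * ∫ x, g x ∂ν + δ * ∫ x, ‖δ⁻¹ * f x‖ ^ p.toReal * g x ∂ν := by
  have hp : 1 ≤ p.toReal := ENNReal.toReal_mono hp2 hp1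
  have hfp := (hf.const_mul δ⁻¹).integrable_norm_rpow (one_pos.trans_le hp1).ne' hp2
  have hfpg := hfp.mul_bdd hg.1 (ae_of_all _ hC)
  rw [← mul_add, ← integral_add hg hfpg, ← integral_const_mul]
  refine integral_mono (integrable_norm_mul_of_memLp hp1 hp2 hf hg hC)
    ((hg.add hfpg).const_mul δ) fun x => ?_
  have hf_eq : ‖f x‖ = δ * ‖δ⁻¹ * f x‖ := by
    rw [norm_mul, norm_inv, norm_of_nonneg hδ.le, mul_inv_cancel_left₀ hδ.ne']
  calc ‖f x‖ * g x = δ * (‖δ⁻¹ * f x‖ * g x) := by rw [hf_eq]; ring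
    _ ≤ δ * ((1 + ‖δ⁻¹ * f x‖ ^ p.toReal) * g x) := by
      gcongr
      · exact hg_nonneg x
      · exact le_one_add_rpow (norm_nonneg _) hp
    _ = δ * (g x + ‖δ⁻¹ * f x‖ ^ p.toReal * g x) := by ring

variable {G : Type*} [AddGroup G] [TopologicalSpace G] [IsTopologicalAddGroup G]

lemma tendsto_comp_sub_cocompact {g : G → ℝ} (hg0 : Tendsto g (cocompact G) (𝓝 0)) (x : G) :
    Tendsto (fun a => g (x - a)) (cocompact G) (𝓝 0) :=
  hg0.comp (Homeomorph.subLeft x).isClosedEmbedding.tendsto_cocompact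

variable [MeasurableSpace G] [BorelSpace G] {ν : Measure G} [(cocompact G).IsCountablyGenerated]

lemma tendsto_integral_mul_comp_sub_cocompact {h g : G → ℝ} (hh : Integrable h ν)
    (hg : Continuous g) (hg0 : Tendsto g (cocompact G) (𝓝 0)) :
    Tendsto (fun a => ∫ x, h x * g (x - a) ∂ν) (cocompact G) (𝓝 0) := by
  obtain ⟨C, hC⟩ := exists_norm_le_of_tendsto_cocompact hg hg0
  rw [← integral_zero G ℝ (μ := ν)]
  refine tendsto_integral_filter_of_dominated_convergence (fun x => ‖h x‖ * C) ?_ ?_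
    (hh.norm.mul_const C) (ae_of_all _ fun x => ?_)
  · have hcont (a : G) : Continuous fun x => g (x - a) := by fun_prop
    exact .of_forall fun a => hh.1.mul (hcont a).aestronglyMeasurable
  · refine .of_forall fun a => ae_of_all _ fun x => ?_
    rw [norm_mul]
    exact mul_le_mul_of_nonneg_left (hC _) (norm_nonneg _)
  · simpa using (tendsto_comp_sub_cocompact hg0 x).const_mul (h x)

lemma tendsto_integral_norm_mul_comp_sub_cocompact [ν.IsAddRightInvariant] {p : ENNReal}
    (hp1 : 1 ≤ p) (hp2 : p ≠ ⊤) {f g : G → ℝ} (hf : MemLp f p ν) (hg : Continuous g)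
    (hg0 : Tendsto g (cocompact G) (𝓝 0)) (hgi : Integrable g ν) (hg_nonneg : ∀ x, 0 ≤ g x) :
    Tendsto (fun a => ∫ x, ‖f x‖ * g (x - a) ∂ν) (cocompact G) (𝓝 0) := by
  obtain ⟨C, hC⟩ := exists_norm_le_of_tendsto_cocompact hg hg0
  have split_le {δ : ℝ} (hδ : 0 < δ) (a : G) : ∫ x, ‖f x‖ * g (x - a) ∂ν ≤
      δ * ∫ x, g x ∂ν + δ * ∫ x, ‖δ⁻¹ * f x‖ ^ p.toReal * g (x - a) ∂ν := by
    rw [← integral_sub_right_eq_self g a]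
    exact integral_norm_mul_le_of_memLp hp1 hp2 hf (hgi.comp_sub_right a) (fun x => hC _)
      (fun x => hg_nonneg _) hδ
  refine tendsto_order.2 ⟨fun c hc => .of_forall fun a => hc.trans_le <|
    integral_nonneg fun x => mul_nonneg (norm_nonneg _) (hg_nonneg _), fun c hc => ?_⟩
  obtain ⟨δ, hδ, hδc⟩ := exists_pos_mul_lt hc (∫ x, g x ∂ν)
  rw [mul_comm] at hδc
  have hfp := (hf.const_mul δ⁻¹).integrable_norm_rpow (one_pos.trans_le hp1).ne' hp2
  have hlim := ((tendsto_integral_mul_comp_sub_cocompact hfp hg hg0).const_mul δ).const_add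
    (δ * ∫ x, g x ∂ν)
  rw [mul_zero, add_zero] at hlim
  exact (hlim.eventually_lt_const hδc).mono fun a ha => (split_le hδ a).trans_lt ha

end Translates

section Sobolev

variable {u v : ℝ → ℝ}

lemma intervalIntegrable_of_memLp {f : ℝ → ℝ} {p : ENNReal} (hp : 1 ≤ p)
    (hf : MemLp f p volume) (a b : ℝ) : IntervalIntegrable f volume a b :=
  intervalIntegrable_iff.2 <| ((hf.locallyIntegrable hp).integrableOn_isCompact
    isCompact_uIcc).mono_set Set.uIoc_subset_uIcc

lemma IsH1.exists_memLp_ae_hasDerivAt (hu : IsH1 u) :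
    ∃ u' : ℝ → ℝ, MemLp u' 2 volume ∧ ∀ᵐ x, HasDerivAt u (u' x) x := by
  obtain ⟨-, -, u', hu', hftc⟩ := hu
  refine ⟨u', hu', ?_⟩
  filter_upwards [LocallyIntegrable.ae_hasDerivAt_integral
    (hu'.locallyIntegrable one_le_two)] with x hx
  rw [funext hftc]
  exact (hx 0).const_add (u 0)

lemma IsH1.ae_differentiableAt (hu : IsH1 u) : ∀ᵐ x, DifferentiableAt ℝ u x :=
  let ⟨_, _, hd⟩ := hu.exists_memLp_ae_hasDerivAt
  hd.mono fun _ hx => hx.differentiableAt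

lemma IsH1.memLp_deriv (hu : IsH1 u) : MemLp (deriv u) 2 volume :=
  let ⟨_, hu', hd⟩ := hu.exists_memLp_ae_hasDerivAt
  hu'.ae_eq (hd.mono fun _ hx => hx.deriv.symm)

lemma IsH1.absolutelyContinuousOnInterval (hu : IsH1 u) (x : ℝ) :
    AbsolutelyContinuousOnInterval u 0 x := by
  obtain ⟨-, -, u', hu', hftc⟩ := hu
  have hint := intervalIntegrable_of_memLp one_le_two hu' 0 x
  rw [funext hftc]
  exact (LipschitzWith.const (u 0)).lipschitzOnWith.absolutelyContinuousOnInterval.fun_add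
    (hint.absolutelyContinuousOnInterval_intervalIntegral Set.left_mem_uIcc)

lemma isH1_of_absolutelyContinuousOnInterval (hc : Continuous u) (hu : MemLp u 2 volume)
    (hu' : MemLp (deriv u) 2 volume) (hac : ∀ x, AbsolutelyContinuousOnInterval u 0 x) :
    IsH1 u :=
  ⟨hc, hu, deriv u, hu', fun x => by rw [(hac x).integral_deriv_eq_sub]; ring⟩

lemma IsH1.comp_sub_right (hu : IsH1 u) (a : ℝ) : IsH1 fun x => u (x - a) := by
  obtain ⟨hc, h2, u', hu', hftc⟩ := hu
  have hshift := measurePreserving_sub_right (volume : Measure ℝ) a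
  refine ⟨by fun_prop, h2.comp_measurePreserving hshift, fun x => u' (x - a),
    hu'.comp_measurePreserving hshift, fun x => ?_⟩
  have hint := intervalIntegrable_of_memLp one_le_two hu'
  calc u (x - a) = u 0 + ((∫ t in (0:ℝ)..(0 - a), u' t) + ∫ t in (0 - a)..(x - a), u' t) := by
        rw [intervalIntegral.integral_add_adjacent_intervals (hint _ _) (hint _ _), ← hftc]
    _ = u (0 - a) + ∫ t in (0:ℝ)..x, u' (t - a) := by
        rw [intervalIntegral.integral_comp_sub_right, hftc (0 - a), add_assoc]

/-- `u²` is the primitive of `2uu' ∈ L¹`. -/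
lemma IsH1.exists_abs_le (hu : IsH1 u) : ∃ C, ∀ x, |u x| ≤ C := by
  set w : ℝ → ℝ := fun x => deriv u x * u x + u x * deriv u x
  have hw : Integrable w :=
    (hu.memLp_deriv.integrable_mul hu.2.1).add (hu.2.1.integrable_mul hu.memLp_deriv)
  refine ⟨√(u 0 * u 0 + ∫ x, ‖w x‖), fun x => abs_le_sqrt ?_⟩
  have hac := hu.absolutelyContinuousOnInterval x
  have hle : ∫ t in (0:ℝ)..x, w t ≤ ∫ t, ‖w t‖ :=
    (le_abs_self _).trans <| intervalIntegral.norm_integral_le_integral_norm_uIoc.trans <|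
      setIntegral_le_integral hw.norm (ae_of_all _ fun _ => norm_nonneg _)
  linarith [hac.integral_deriv_mul_eq_sub hac, sq (u x)]

lemma IsH1.memLp_top (hu : IsH1 u) : MemLp u ⊤ volume :=
  let ⟨C, hC⟩ := hu.exists_abs_le
  memLp_top_of_bound hu.1.aestronglyMeasurable C (ae_of_all _ hC)

lemma IsH1.abs_le_supNorm (hu : IsH1 u) (x : ℝ) : |u x| ≤ supNorm u :=
  let ⟨C, hC⟩ := hu.exists_abs_le
  le_ciSup (f := fun x => |u x|) ⟨C, Set.forall_mem_range.2 hC⟩ x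

lemma IsH1.ae_deriv_mul (hu : IsH1 u) (hv : IsH1 v) :
    ∀ᵐ x, deriv (u * v) x = deriv u x * v x + u x * deriv v x := by
  filter_upwards [hu.ae_differentiableAt, hv.ae_differentiableAt] with x hx hx'
  exact deriv_mul hx hx'

lemma IsH1.mul (hu : IsH1 u) (hv : IsH1 v) : IsH1 (u * v) := by
  refine isH1_of_absolutelyContinuousOnInterval (hu.1.mul hv.1) (hv.2.1.mul hu.memLp_top) ?_
    fun x => (hu.absolutelyContinuousOnInterval x).fun_mul (hv.absolutelyContinuousOnInterval x)
  exact ((hv.memLp_top.mul hu.memLp_deriv).add (hv.memLp_deriv.mul hu.memLp_top)).ae_eq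
    ((hu.ae_deriv_mul hv).mono fun x hx => hx.symm)

lemma energy_comp_sub_right (u : ℝ → ℝ) (a : ℝ) : energy (fun x => u (x - a)) = energy u := by
  simp only [energy, deriv_comp_sub_const]
  exact integral_sub_right_eq_self (fun x => deriv u x ^ 2) a

end Sobolev

namespace InKa

variable {a : ℝ} {u v : ℝ → ℝ}

lemma of_abs_le_one (hu : IsH1 u) (ha : u a = 1) (hle : ∀ x, |u x| ≤ 1) : InKa a u :=
  ⟨hu, ha, le_antisymm (ciSup_le hle) (by simpa [ha] using hu.abs_le_supNorm a)⟩

lemma abs_le_one (hu : InKa a u) (x : ℝ) : |u x| ≤ 1 := hu.2.2 ▸ hu.1.abs_le_supNorm x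

lemma ne_zero (hu : InKa a u) : u ≠ 0 := by
  rintro rfl
  exact zero_ne_one hu.2.1

lemma comp_sub_right (hu : InKa 0 u) (a : ℝ) : InKa a fun x => u (x - a) :=
  of_abs_le_one (hu.1.comp_sub_right a) (by simpa using hu.2.1) fun x => hu.abs_le_one (x - a)

lemma mul (hu : InKa a u) (hv : InKa a v) : InKa a (u * v) := by
  refine of_abs_le_one (hu.1.mul hv.1) (by simp [hu.2.1, hv.2.1]) fun x => ?_
  rw [Pi.mul_apply, abs_mul]
  exact mul_le_one₀ (hu.abs_le_one x) (abs_nonneg _) (hv.abs_le_one x)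

end InKa

section Cutoff

/-- The Lorentz bump `x ↦ 1 / (1 + (η x)²)`, used as a cutoff of width `1 / η`. -/
noncomputable def lorentzian (η x : ℝ) : ℝ := (1 + (η * x) ^ 2)⁻¹

lemma lorentzian_pos (η x : ℝ) : 0 < lorentzian η x := by
  unfold lorentzian
  positivity

lemma lorentzian_le_one (η x : ℝ) : lorentzian η x ≤ 1 :=
  inv_le_one_of_one_le₀ (le_add_of_nonneg_right (sq_nonneg _))

lemma lorentzian_sq_le (η x : ℝ) : lorentzian η x ^ 2 ≤ lorentzian η x :=
  pow_le_of_le_one (lorentzian_pos η x).le (lorentzian_le_one η x) two_ne_zero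

lemma contDiff_lorentzian (η : ℝ) : ContDiff ℝ 1 (lorentzian η) :=
  ContDiff.inv (by fun_prop) fun _ => by positivity

lemma deriv_lorentzian (η x : ℝ) :
    deriv (lorentzian η) x = -(2 * η * (η * x)) * lorentzian η x ^ 2 := by
  have hpoly : HasDerivAt (fun x => 1 + (η * x) ^ 2) (2 * (η * x) * η) x := by
    simpa using (((hasDerivAt_id x).const_mul η).pow 2).const_add 1
  rw [show lorentzian η = (fun x => 1 + (η * x) ^ 2)⁻¹ from rfl,
    (hpoly.inv (by positivity)).deriv]
  simp only [Pi.inv_apply]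
  field_simp

lemma abs_deriv_lorentzian_le {η : ℝ} (hη : 0 ≤ η) (x : ℝ) :
    |deriv (lorentzian η) x| ≤ η * lorentzian η x := by
  have hk := lorentzian_pos η x
  have hamgm : 2 * |η * x| * lorentzian η x ≤ 1 := by
    rw [lorentzian, ← div_eq_mul_inv, div_le_one (by positivity), ← sq_abs (η * x)]
    linarith [two_mul_le_add_sq 1 |η * x|]
  calc |deriv (lorentzian η) x| = η * lorentzian η x * (2 * |η * x| * lorentzian η x) := by
        rw [deriv_lorentzian, abs_mul, abs_neg, abs_mul, abs_mul, abs_two, abs_of_nonneg hη,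
          abs_of_nonneg (sq_nonneg (lorentzian η x))]
        ring
    _ ≤ η * lorentzian η x := mul_le_of_le_one_right (by positivity) hamgm

lemma deriv_lorentzian_sq_le {η : ℝ} (hη : 0 ≤ η) (x : ℝ) :
    deriv (lorentzian η) x ^ 2 ≤ η ^ 2 * lorentzian η x :=
  calc deriv (lorentzian η) x ^ 2 ≤ (η * lorentzian η x) ^ 2 :=
        sq_le_sq' (abs_le.1 (abs_deriv_lorentzian_le hη x)).1
          (abs_le.1 (abs_deriv_lorentzian_le hη x)).2
    _ = η ^ 2 * lorentzian η x ^ 2 := mul_pow _ _ _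
    _ ≤ η ^ 2 * lorentzian η x := by gcongr; exact lorentzian_sq_le η x

lemma integrable_lorentzian {η : ℝ} (hη : 0 < η) : Integrable (lorentzian η) :=
  integrable_inv_one_add_sq.comp_mul_left' hη.ne'

lemma integral_lorentzian {η : ℝ} (hη : 0 < η) : ∫ x, lorentzian η x = π / η := by
  rw [div_eq_inv_mul, ← integral_univ_inv_one_add_sq, ← abs_of_pos (inv_pos.2 hη)]
  exact Measure.integral_comp_mul_left (fun x => (1 + x ^ 2)⁻¹) η

lemma isH1_lorentzian {η : ℝ} (hη : 0 < η) : IsH1 (lorentzian η) := by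
  have hsmooth := contDiff_lorentzian η
  have hk : MemLp (lorentzian η) 2 volume := by
    rw [memLp_two_iff_integrable_sq hsmooth.continuous.aestronglyMeasurable]
    refine (integrable_lorentzian hη).mono' (hsmooth.continuous.pow 2).aestronglyMeasurable
      (ae_of_all _ fun x => ?_)
    rw [norm_of_nonneg (sq_nonneg _)]
    exact lorentzian_sq_le η x
  refine isH1_of_absolutelyContinuousOnInterval hsmooth.continuous hk ?_
    fun x => hsmooth.contDiffOn.absolutelyContinuousOnInterval
  refine hk.of_le_mul (c := η) (hsmooth.continuous_deriv le_rfl).aestronglyMeasurable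
    (ae_of_all _ fun x => ?_)
  rw [norm_of_nonneg (lorentzian_pos η x).le]
  exact abs_deriv_lorentzian_le hη.le x

lemma inKa_lorentzian {η : ℝ} (hη : 0 < η) : InKa 0 (lorentzian η) :=
  .of_abs_le_one (isH1_lorentzian hη) (by simp [lorentzian]) fun x => by
    rw [abs_of_pos (lorentzian_pos η x)]
    exact lorentzian_le_one η x

lemma tendsto_lorentzian_cocompact {η : ℝ} (hη : 0 < η) :
    Tendsto (lorentzian η) (cocompact ℝ) (𝓝 0) := by
  have hscale : Tendsto (fun x => η * x) (cocompact ℝ) (cocompact ℝ) :=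
    (Homeomorph.mulLeft₀ η hη.ne').isClosedEmbedding.tendsto_cocompact
  have hsq : Tendsto (fun x : ℝ => x ^ 2) (cocompact ℝ) atTop := by
    simpa [Function.comp_def] using
      (tendsto_pow_atTop two_ne_zero).comp (tendsto_norm_cocompact_atTop (E := ℝ))
  exact (tendsto_atTop_add_const_left _ 1 (hsq.comp hscale)).inv_tendsto_atTop

lemma energy_lorentzian_le {η : ℝ} (hη : 0 < η) : energy (lorentzian η) ≤ π * η := by
  calc energy (lorentzian η) ≤ ∫ x, η ^ 2 * lorentzian η x :=
        integral_mono (isH1_lorentzian hη).memLp_deriv.integrable_sq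
          ((integrable_lorentzian hη).const_mul _) (deriv_lorentzian_sq_le hη.le)
    _ = π * η := by
        rw [integral_const_mul, integral_lorentzian hη]
        field_simp

lemma exists_inKa (a : ℝ) : ∃ u, InKa a u :=
  ⟨_, (inKa_lorentzian one_pos).comp_sub_right a⟩

end Cutoff

section Energy

variable {V u v : ℝ → ℝ}

lemma ae_nonneg_of_essInf_nonneg {α : Type*} [MeasurableSpace α] {ν : Measure α} {V : α → ℝ}
    (hV : MemLp V ⊤ ν) (hpos : 0 ≤ essInf V ν) : 0 ≤ᵐ[ν] V := by
  have hbdd : IsBoundedUnder (· ≥ ·) (ae ν) V :=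
    ⟨_, (ae_le_lpNorm_exponent_top hV).mono fun x hx => (abs_le.1 hx).1⟩
  exact (ae_essInf_le hbdd).mono fun x hx => hpos.trans hx

lemma integrable_deriv_sq_add_mul_sq (hV : MemLp V ⊤ volume) (hu : IsH1 u) :
    Integrable fun x => deriv u x ^ 2 + V x * u x ^ 2 :=
  hu.memLp_deriv.integrable_sq.add
    (hu.2.1.integrable_sq.bdd_mul hV.1 (ae_le_lpNorm_exponent_top hV))

lemma IV_nonneg (hV0 : 0 ≤ᵐ[volume] V) (u : ℝ → ℝ) : 0 ≤ IV V u :=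
  integral_nonneg_of_ae <| hV0.mono fun _ hx =>
    add_nonneg (sq_nonneg _) (mul_nonneg hx (sq_nonneg _))

lemma add_sq_le_one_add_mul {ε : ℝ} (hε : 0 < ε) (x y : ℝ) :
    (x + y) ^ 2 ≤ (1 + ε) * (x ^ 2 + y ^ 2 / ε) := by
  have hgap : (1 + ε) * (x ^ 2 + y ^ 2 / ε) - (x + y) ^ 2 = (ε * x - y) ^ 2 / ε := by
    field_simp
    ring
  exact sub_nonneg.1 (hgap ▸ by positivity)

lemma IV_mul_le (hV : MemLp V ⊤ volume) (hV0 : 0 ≤ᵐ[volume] V) (hu : IsH1 u) (hv : IsH1 v)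
    (hu1 : ∀ x, |u x| ≤ 1) (hv1 : ∀ x, |v x| ≤ 1) {ε : ℝ} (hε : 0 < ε) :
    IV V (u * v) ≤ (1 + ε) * (IV V u + energy v / ε) := by
  have hIu := integrable_deriv_sq_add_mul_sq hV hu
  have hEv := hv.memLp_deriv.integrable_sq.div_const ε
  rw [IV, IV, energy, ← integral_div, ← integral_add hIu hEv, ← integral_const_mul]
  refine integral_mono_ae (integrable_deriv_sq_add_mul_sq hV (hu.mul hv))
    ((hIu.add hEv).const_mul _) ?_
  filter_upwards [hV0, hu.ae_deriv_mul hv] with x hVx hder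
  have hVx : 0 ≤ V x := hVx
  have hu2 : u x ^ 2 ≤ 1 := (sq_le_one_iff_abs_le_one _).2 (hu1 x)
  have hv2 : v x ^ 2 ≤ 1 := (sq_le_one_iff_abs_le_one _).2 (hv1 x)
  have hkin : deriv (u * v) x ^ 2 ≤ (1 + ε) * (deriv u x ^ 2 + deriv v x ^ 2 / ε) := by
    rw [hder]
    refine (add_sq_le_one_add_mul hε _ _).trans ?_
    rw [mul_pow, mul_pow]
    gcongr
    · exact mul_le_of_le_one_right (sq_nonneg _) hv2
    · exact mul_le_of_le_one_left (sq_nonneg _) hu2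
  have hpot : V x * (u * v) x ^ 2 ≤ (1 + ε) * (V x * u x ^ 2) := by
    rw [Pi.mul_apply, mul_pow, ← mul_assoc]
    exact (mul_le_of_le_one_right (by positivity) hv2).trans
      (le_mul_of_one_le_left (by positivity) (by linarith))
  linarith

end Energy

section Perturbation

variable {p : ENNReal} {μ₀ : ℝ → ℝ} {u v : ℝ → ℝ}

/-- `∫ |μ₀| k² dx + ∫ k² dμ₁⁺`, a bound for the quadratic form of `μ₀ + μ₁` on all functions
dominated by `k`. -/
noncomputable def perturbationMass (μ₀ : ℝ → ℝ) (μ₁ : SignedMeasure ℝ) (k : ℝ → ℝ) : ℝ :=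
  (∫ x, ‖μ₀ x‖ * k x ^ 2) + ∫ x, k x ^ 2 ∂μ₁.toJordanDecomposition.posPart

lemma sMeasInt_le_integral_posPart {μ : SignedMeasure ℝ} {f g : ℝ → ℝ} (hf : ∀ x, 0 ≤ f x)
    (hfg : ∀ x, f x ≤ g x) (hg : Integrable g μ.toJordanDecomposition.posPart) :
    sMeasInt μ f ≤ ∫ x, g x ∂μ.toJordanDecomposition.posPart :=
  (sub_le_self _ (integral_nonneg hf)).trans
    (integral_mono_of_nonneg (ae_of_all _ hf) hg (ae_of_all _ hfg))

lemma IsH1.integrable_sq_of_isFiniteMeasure (hu : IsH1 u) (ν : Measure ℝ) [IsFiniteMeasure ν] :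
    Integrable (fun x => u x ^ 2) ν :=
  let ⟨C, hC⟩ := hu.exists_abs_le
  (MemLp.of_bound hu.1.aestronglyMeasurable C (ae_of_all _ hC)).integrable_sq

lemma IsH1.integrable_norm_mul_sq (hu : IsH1 u) (hp1 : 1 ≤ p) (hp2 : p ≠ ⊤)
    (hμ₀ : MemLp μ₀ p volume) : Integrable fun x => ‖μ₀ x‖ * u x ^ 2 := by
  obtain ⟨C, hC⟩ := hu.exists_abs_le
  refine integrable_norm_mul_of_memLp hp1 hp2 hμ₀ hu.2.1.integrable_sq (C := C ^ 2) fun x => ?_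
  rw [norm_pow]
  exact pow_le_pow_left₀ (norm_nonneg _) (hC x) 2

lemma perturbation_le_perturbationMass (hp1 : 1 ≤ p) (hp2 : p ≠ ⊤) (hμ₀ : MemLp μ₀ p volume)
    (μ₁ : SignedMeasure ℝ) (hv : IsH1 v) (huv : ∀ x, |u x| ≤ |v x|) :
    (∫ x, μ₀ x * u x ^ 2) + sMeasInt μ₁ (fun x => u x ^ 2) ≤ perturbationMass μ₀ μ₁ v := by
  have hsq (x : ℝ) : u x ^ 2 ≤ v x ^ 2 := sq_le_sq.2 (huv x)
  refine add_le_add ?_ (sMeasInt_le_integral_posPart (fun x => sq_nonneg _) hsq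
    (hv.integrable_sq_of_isFiniteMeasure _))
  refine (le_norm_self _).trans (norm_integral_le_of_norm_le
    (hv.integrable_norm_mul_sq hp1 hp2 hμ₀) (ae_of_all _ fun x => ?_))
  rw [norm_mul, norm_of_nonneg (sq_nonneg (u x))]
  exact mul_le_mul_of_nonneg_left (hsq x) (norm_nonneg _)

lemma tendsto_perturbationMass_comp_sub_cocompact (hp1 : 1 ≤ p) (hp2 : p ≠ ⊤)
    (hμ₀ : MemLp μ₀ p volume) (μ₁ : SignedMeasure ℝ) (hv : IsH1 v)
    (hv0 : Tendsto v (cocompact ℝ) (𝓝 0)) :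
    Tendsto (fun a => perturbationMass μ₀ μ₁ fun x => v (x - a)) (cocompact ℝ) (𝓝 0) := by
  have : (cocompact ℝ).IsCountablyGenerated := by
    rw [cocompact_eq_atBot_atTop]
    infer_instance
  have hsq0 : Tendsto (fun x => v x ^ 2) (cocompact ℝ) (𝓝 0) := by simpa using hv0.pow 2
  have hμ₁ := tendsto_integral_mul_comp_sub_cocompact
    (integrable_const (1 : ℝ) (μ := μ₁.toJordanDecomposition.posPart)) (hv.1.pow 2) hsq0
  simpa [perturbationMass] using (tendsto_integral_norm_mul_comp_sub_cocompact hp1 hp2 hμ₀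
    (hv.1.pow 2) hsq0 hv.2.1.integrable_sq fun x => sq_nonneg (v x)).add hμ₁

end Perturbation

section Invariance

variable {V μ₀ u : ℝ → ℝ} {μ₁ : SignedMeasure ℝ}

lemma mV_le (hV0 : 0 ≤ᵐ[volume] V) (hu : IsH1 u) (hu0 : u ≠ 0) :
    mV V ≤ IV V u / supNorm u ^ 2 := by
  refine csInf_le ⟨0, ?_⟩ ⟨u, hu, hu0, rfl⟩
  rintro _ ⟨v, -, -, rfl⟩
  exact div_nonneg (IV_nonneg hV0 v) (sq_nonneg _)

lemma exists_inKa_IV_lt {a b : ℝ} (h : FV V a < b) : ∃ u, InKa a u ∧ IV V u < b := by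
  obtain ⟨w, hw⟩ := exists_inKa a
  obtain ⟨_, ⟨u, hu, rfl⟩, hlt⟩ := exists_lt_of_csInf_lt (by exact ⟨_, w, hw, rfl⟩) h
  exact ⟨u, hu, hlt⟩

lemma IV_div_le_IVmu_div
    (hnn : 0 ≤ (∫ x, μ₀ x * u x ^ 2) + sMeasInt μ₁ (fun x => u x ^ 2)) :
    IV V u / supNorm u ^ 2 ≤ IVmu V μ₀ μ₁ u / supNorm u ^ 2 := by
  rw [IVmu, add_assoc]
  exact div_le_div_of_nonneg_right (le_add_of_nonneg_right hnn) (sq_nonneg _)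

variable (hV0 : 0 ≤ᵐ[volume] V) (hnn : ∀ u : ℝ → ℝ, IsH1 u →
  0 ≤ (∫ x, μ₀ x * u x ^ 2) + sMeasInt μ₁ (fun x => u x ^ 2))

include hV0 hnn

lemma mV_le_mVmu : mV V ≤ mVmu V μ₀ μ₁ := by
  obtain ⟨w, hw⟩ := exists_inKa 0
  refine le_csInf ⟨_, w, hw.1, hw.ne_zero, rfl⟩ ?_
  rintro _ ⟨u, hu, hu0, rfl⟩
  exact (mV_le hV0 hu hu0).trans (IV_div_le_IVmu_div (hnn u hu))

lemma mVmu_le_IVmu {a : ℝ} (hu : InKa a u) : mVmu V μ₀ μ₁ ≤ IVmu V μ₀ μ₁ u := by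
  refine csInf_le ⟨0, ?_⟩ ⟨u, hu.1, hu.ne_zero, by rw [hu.2.2, one_pow, div_one]⟩
  rintro _ ⟨v, hv, -, rfl⟩
  exact (div_nonneg (IV_nonneg hV0 v) (sq_nonneg _)).trans (IV_div_le_IVmu_div (hnn v hv))

variable {p : ENNReal} (hV : MemLp V ⊤ volume) (hp1 : 1 ≤ p) (hp2 : p ≠ ⊤)
  (hμ₀ : MemLp μ₀ p volume)

include hV hp1 hp2 hμ₀

lemma mVmu_le_FV_add_perturbationMass {k : ℝ → ℝ} {a ε : ℝ} (hk : InKa a k) (hε : 0 < ε) :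
    mVmu V μ₀ μ₁ ≤ (1 + ε) * (FV V a + energy k / ε) + perturbationMass μ₀ μ₁ k := by
  suffices h : ∀ b > FV V a,
      mVmu V μ₀ μ₁ ≤ (1 + ε) * (b + energy k / ε) + perturbationMass μ₀ μ₁ k by
    have hcont : Continuous fun b => (1 + ε) * (b + energy k / ε) + perturbationMass μ₀ μ₁ k := by
      fun_prop
    exact ge_of_tendsto (hcont.continuousWithinAt (s := Set.Ioi (FV V a)))
      (eventually_mem_nhdsWithin.mono h)
  intro b hb
  obtain ⟨u, hu, hub⟩ := exists_inKa_IV_lt hb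
  have hdom (x : ℝ) : |(u * k) x| ≤ |k x| := by
    rw [Pi.mul_apply, abs_mul]
    exact mul_le_of_le_one_left (abs_nonneg _) (hu.abs_le_one x)
  calc mVmu V μ₀ μ₁ ≤ IVmu V μ₀ μ₁ (u * k) := mVmu_le_IVmu hV0 hnn (hu.mul hk)
    _ = IV V (u * k) +
        ((∫ x, μ₀ x * (u * k) x ^ 2) + sMeasInt μ₁ fun x => (u * k) x ^ 2) := add_assoc _ _ _
    _ ≤ (1 + ε) * (IV V u + energy k / ε) + perturbationMass μ₀ μ₁ k :=
      add_le_add (IV_mul_le hV hV0 hu.1 hk.1 hu.abs_le_one hk.abs_le_one hε)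
        (perturbation_le_perturbationMass hp1 hp2 hμ₀ μ₁ hk.1 hdom)
    _ ≤ (1 + ε) * (b + energy k / ε) + perturbationMass μ₀ μ₁ k := by gcongr

lemma mVmu_le_of_mapClusterPt {k : ℝ → ℝ} {m ε : ℝ} (hm : MapClusterPt m (cocompact ℝ) (FV V))
    (hk : InKa 0 k) (hk0 : Tendsto k (cocompact ℝ) (𝓝 0)) (hε : 0 < ε) :
    mVmu V μ₀ μ₁ ≤ (1 + ε) * (m + energy k / ε) := by
  obtain ⟨l, hl, hF⟩ := mapClusterPt_iff_ultrafilter.1 hm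
  have hmass := (tendsto_perturbationMass_comp_sub_cocompact hp1 hp2 hμ₀ μ₁ hk.1 hk0).mono_left hl
  have hlim := ((hF.add_const (energy k / ε)).const_mul (1 + ε)).add hmass
  rw [add_zero] at hlim
  refine ge_of_tendsto hlim (.of_forall fun a => ?_)
  rw [← energy_comp_sub_right k a]
  exact mVmu_le_FV_add_perturbationMass hV0 hnn hV hp1 hp2 hμ₀ (hk.comp_sub_right a) hε

lemma mVmu_le_mV (hm : MapClusterPt (mV V) (cocompact ℝ) (FV V)) : mVmu V μ₀ μ₁ ≤ mV V := by
  have hbound (ε : ℝ) (hε : 0 < ε) : mVmu V μ₀ μ₁ ≤ (1 + ε) * (mV V + π * ε) := by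
    have hη : 0 < ε ^ 2 := by positivity
    refine (mVmu_le_of_mapClusterPt hV0 hnn hV hp1 hp2 hμ₀ hm (inKa_lorentzian hη)
      (tendsto_lorentzian_cocompact hη) hε).trans ?_
    gcongr
    rw [div_le_iff₀ hε, mul_assoc, ← sq]
    exact energy_lorentzian_le hη
  have hcont : Continuous fun ε => (1 + ε) * (mV V + π * ε) := by fun_prop
  have hlim := (hcont.tendsto 0).mono_left (nhdsWithin_le_nhds (s := Set.Ioi 0))
  simp only [add_zero, mul_zero, one_mul] at hlim
  exact ge_of_tendsto hlim (eventually_mem_nhdsWithin.mono hbound)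

end Invariance

theorem mV_perturbation_invariance_general (V : ℝ → ℝ) (hV : MemLp V ⊤ (volume : Measure ℝ))
    (hV0 : 0 ≤ᵐ[volume] V) (hlim : MapClusterPt (mV V) (cocompact ℝ) (FV V))
    (p : ENNReal) (hp1 : 1 ≤ p) (hp2 : p ≠ ⊤)
    (μ₀ : ℝ → ℝ) (hμ₀ : MemLp μ₀ p (volume : Measure ℝ))
    (μ₁ : SignedMeasure ℝ)
    (hnn : ∀ u : ℝ → ℝ, IsH1 u →
      0 ≤ (∫ x : ℝ, μ₀ x * (u x) ^ 2) + sMeasInt μ₁ (fun x => (u x) ^ 2)) :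
    mVmu V μ₀ μ₁ = mV V ∧
      ∀ u : ℝ → ℝ, IsH1 u → u ≠ 0 →
        IVmu V μ₀ μ₁ u / (supNorm u) ^ 2 = mVmu V μ₀ μ₁ →
        IV V u / (supNorm u) ^ 2 = mV V := by
  have heq : mVmu V μ₀ μ₁ = mV V :=
    (mVmu_le_mV hV0 hnn hV hp1 hp2 hμ₀ hlim).antisymm (mV_le_mVmu hV0 hnn)
  refine ⟨heq, fun u hu hu0 hmin => le_antisymm ?_ (mV_le hV0 hu hu0)⟩
  calc IV V u / supNorm u ^ 2 ≤ IVmu V μ₀ μ₁ u / supNorm u ^ 2 := IV_div_le_IVmu_div (hnn u hu)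
    _ = mV V := hmin.trans heq

/-- **Invariance of `m` under nonnegative decaying perturbations.**
Let `V ∈ L^∞(ℝ)` with `ess inf V > 0` satisfy `m(V) = lim_{a→∞} F(a;V)` or
`m(V) = lim_{a→-∞} F(a;V)`.  Let `μ = μ₀ + μ₁` with `μ₀ ∈ L^p(ℝ)` (`1 ≤ p < ∞`) and `μ₁` a
finite signed Radon measure, and suppose `μ(u,u) ≥ 0` for all `u ∈ H¹(ℝ)`.
Then `m(V+μ) = m(V)` and `M(V+μ) ⊆ M(V)`. -/
theorem mV_perturbation_invariance (V : ℝ → ℝ) (hV : MemLp V ⊤ (volume : Measure ℝ))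
    (hpos : 0 < essInf V (volume : Measure ℝ))
    (hlim : Tendsto (fun a : ℝ => FV V a) atTop (𝓝 (mV V)) ∨
      Tendsto (fun a : ℝ => FV V a) atBot (𝓝 (mV V)))
    (p : ENNReal) (hp1 : 1 ≤ p) (hp2 : p ≠ ⊤)
    (μ₀ : ℝ → ℝ) (hμ₀ : MemLp μ₀ p (volume : Measure ℝ))
    (μ₁ : SignedMeasure ℝ)
    (hnn : ∀ u : ℝ → ℝ, IsH1 u →
      0 ≤ (∫ x : ℝ, μ₀ x * (u x) ^ 2) + sMeasInt μ₁ (fun x => (u x) ^ 2)) :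
    mVmu V μ₀ μ₁ = mV V ∧
      ∀ u : ℝ → ℝ, IsH1 u → u ≠ 0 →
        IVmu V μ₀ μ₁ u / (supNorm u) ^ 2 = mVmu V μ₀ μ₁ →
        IV V u / (supNorm u) ^ 2 = mV V := by
  have hF : MapClusterPt (mV V) (cocompact ℝ) (FV V) := hlim.elim
    (fun h => h.mapClusterPt.mono atTop_le_cocompact)
    fun h => h.mapClusterPt.mono atBot_le_cocompact
  exact mV_perturbation_invariance_general V hV (ae_nonneg_of_essInf_nonneg hV hpos.le) hF p hp1
    hp2 μ₀ hμ₀ μ₁ hnn
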